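/- Let d ≥ 1 and let L(u) = π^{−3/2} (Γ((d+1)/2)/Γ(d/2)) (1 − Γ(d/2) · J_{d/2−1}(2πu)/(πu)^{d/2−1}) for u > 0, and K̂₂(τ) = ∫₀^∞ u^{−2+2πiτ} L(u) du for τ ∈ ℝ. Then K̂₂(0) = 1 and K̂₂(τ) ≠ 0 for every real τ. -/

import Mathlib

open MeasureTheory Metric Set Real Complex Filter
open scoped FourierTransform RealInnerProductSpace Pointwise ENNReal Topology

noncomputable section

/-- The Euclidean space `ℝ^d`. -/
abbrev E (d : ℕ) := EuclideanSpace ℝ (Fin d)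

/-- View a plain vector `Fin d → ℝ` as a point of Euclidean space. -/
def toE {d : ℕ} (v : Fin d → ℝ) : E d := (EuclideanSpace.equiv (Fin d) ℝ).symm v

/-- The point lattice `T = A ℤ^d`. -/
def latticeSet (d : ℕ) (A : Matrix (Fin d) (Fin d) ℝ) : Set (E d) :=
  {p | ∃ n : Fin d → ℤ, p = toE (A.mulVec fun i => (n i : ℝ))}

/-- The fundamental region `F_T = A [0,1)^d`. -/
def fundRegion (d : ℕ) (A : Matrix (Fin d) (Fin d) ℝ) : Set (E d) :=
  (fun y => toE (A.mulVec y)) '' (Set.pi Set.univ fun _ : Fin d => Set.Ico (0 : ℝ) 1)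

/-- Number of lattice points in the translate `D + x`. -/
def latticeCount (d : ℕ) (A : Matrix (Fin d) (Fin d) ℝ) (D : Set (E d)) (x : E d) : ℕ :=
  (((fun y => y + x) '' D) ∩ latticeSet d A).ncard

/-- The dual lattice `T* = {ξ | ξ·p ∈ ℤ for all p ∈ T}`. -/
def dualLattice (d : ℕ) (A : Matrix (Fin d) (Fin d) ℝ) : Set (E d) :=
  {ξ | ∀ p ∈ latticeSet d A, ∃ k : ℤ, ⟪ξ, p⟫ = (k : ℝ)}

/-- The (complex-valued) indicator function of a set. -/
def indC {d : ℕ} (D : Set (E d)) : E d → ℂ := D.indicator 1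

/-- The covariogram `γ_D(x) = ∫ I_D(y) I_D(y - x) dy`. -/
def covariogram {d : ℕ} (D : Set (E d)) (x : E d) : ℝ :=
  ∫ y, (D.indicator (1 : E d → ℝ) y) * (D.indicator (1 : E d → ℝ) (y - x))

/-- The normalized (probability) surface measure on the unit sphere `S^{d-1}`. -/
def sphereProb (d : ℕ) : Measure (sphere (0 : E d) 1) :=
  ((volume : Measure (E d)).toSphere Set.univ)⁻¹ • (volume : Measure (E d)).toSphere

/-- Rotational quadratic average of the modulus of the Fourier transform of `I_D`:
`γ̄̂_D(ρ) = ∫_{S^{d-1}} |Î_D(ρ ξ)|² dσ(ξ)`. -/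
def avgFT {d : ℕ} (D : Set (E d)) (ρ : ℝ) : ℝ :=
  ∫ ξ : sphere (0 : E d) 1, ‖𝓕 (indC D) (ρ • (ξ : E d))‖ ^ 2 ∂(sphereProb d)

/-- The isotropic covariogram, via its (equivalent) definition as the spherical average
`γ̄_D(u) = ∫_{S^{d-1}} γ_D(u ξ) dσ(ξ)`. -/
def isoCov {d : ℕ} (D : Set (E d)) (u : ℝ) : ℝ :=
  ∫ ξ : sphere (0 : E d) 1, covariogram D (u • (ξ : E d)) ∂(sphereProb d)

/-- Bessel function of the first kind (power series definition, real order). -/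
def besselJ (ν : ℝ) (z : ℝ) : ℝ :=
  ∑' k : ℕ, (-1 : ℝ) ^ k * (z / 2) ^ (ν + 2 * k) / (Nat.factorial k * Real.Gamma (ν + k + 1))

/-- `κ_d`, the volume of the unit ball in `ℝ^d`. -/
def unitBallVol (d : ℕ) : ℝ := Real.pi ^ ((d : ℝ) / 2) / Real.Gamma ((d : ℝ) / 2 + 1)

/-- The image of a set `D` under the rotation given by a matrix `M`. -/
def rotSet {d : ℕ} (M : Matrix (Fin d) (Fin d) ℝ) (D : Set (E d)) : Set (E d) :=
  (fun y => toE (M.mulVec (EuclideanSpace.equiv (Fin d) ℝ y))) '' D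

/-- The special orthogonal group `SO(d)`, as a set of matrices. -/
def SOSet (d : ℕ) : Set (Matrix (Fin d) (Fin d) ℝ) :=
  {M | M ∈ Matrix.specialOrthogonalGroup (Fin d) ℝ}

/-- Borel measurable structure on the space of `d × d` real matrices. -/
instance matrixMeasurableSpace {d : ℕ} : MeasurableSpace (Matrix (Fin d) (Fin d) ℝ) :=
  borel _

instance matrixBorelSpace {d : ℕ} : BorelSpace (Matrix (Fin d) (Fin d) ℝ) := ⟨rfl⟩

/-- The kernel `L(u)` from the proof of the Tauberian lemma. -/
def kernelL (d : ℕ) (u : ℝ) : ℝ :=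
  Real.pi ^ (-(3 : ℝ) / 2) * (Real.Gamma (((d : ℝ) + 1) / 2) / Real.Gamma ((d : ℝ) / 2)) *
    (1 - Real.Gamma ((d : ℝ) / 2) * besselJ ((d : ℝ) / 2 - 1) (2 * Real.pi * u) /
      (Real.pi * u) ^ ((d : ℝ) / 2 - 1))

/-- `K̂₂(τ) = ∫₀^∞ u^{-2+2πiτ} L(u) du`. -/
def K2hat (d : ℕ) (τ : ℝ) : ℂ :=
  ∫ u in Set.Ioi (0 : ℝ),
    (u : ℂ) ^ ((-2 : ℂ) + 2 * Real.pi * Complex.I * τ) * (kernelL d u : ℂ)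

/-- Coefficients of the normalized Bessel series. -/
def cF (b : ℝ) (k : ℕ) : ℝ := (-1 : ℝ) ^ k / (Nat.factorial k * Real.Gamma (b + k))

/-- `F_b(w) = ∑ (-w)^k / (k! Γ(b+k))`. -/
def FF (b : ℝ) (w : ℝ) : ℝ := ∑' k : ℕ, cF b k * w ^ k

lemma gamma_lower (b : ℝ) (hb : 0 < b) :
    ∃ C : ℝ, 0 < C ∧ ∀ k : ℕ, C ≤ Real.Gamma (b + k) := by
  refine ⟨min (Real.Gamma b) (Real.Gamma (b + 1)),
    lt_min (Real.Gamma_pos_of_pos hb) (Real.Gamma_pos_of_pos (by linarith)), ?_⟩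
  have h : ∀ k : ℕ, min (Real.Gamma b) (Real.Gamma (b + 1)) ≤ Real.Gamma (b + (k + 1 : ℕ)) := by
    intro k
    induction k with
    | zero => simp
    | succ k ih =>
      have h1 : (0 : ℝ) < b + (k + 1 : ℕ) := by positivity
      have h2 : b + ((k + 1 + 1 : ℕ) : ℝ) = (b + (k + 1 : ℕ)) + 1 := by push_cast; ring
      rw [h2, Real.Gamma_add_one h1.ne']
      have h3 := Real.Gamma_pos_of_pos h1
      have h4 : (1 : ℝ) ≤ b + (k + 1 : ℕ) := by
        push_cast
        have : (0 : ℝ) ≤ k := k.cast_nonneg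
        linarith
      nlinarith
  intro k
  cases k with
  | zero => simp
  | succ k => exact h k

lemma cF_bound (b : ℝ) (hb : 0 < b) :
    ∃ C : ℝ, 0 < C ∧ ∀ k : ℕ, |cF b k| ≤ C / (Nat.factorial k : ℝ) := by
  obtain ⟨C, hC, h⟩ := gamma_lower b hb
  refine ⟨C⁻¹, by positivity, fun k => ?_⟩
  have hk : (0 : ℝ) < Nat.factorial k := by exact_mod_cast Nat.factorial_pos k
  have hG : 0 < Real.Gamma (b + k) := hC.trans_le (h k)
  rw [cF, abs_div, abs_pow, abs_neg, abs_one, one_pow, abs_of_pos (mul_pos hk hG)]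
  rw [one_div, mul_inv, mul_comm, div_eq_mul_inv]
  gcongr
  exact h k

lemma cF_summable (b : ℝ) (hb : 0 < b) (w : ℝ) : Summable fun k => cF b k * w ^ k := by
  obtain ⟨C, hC, h⟩ := cF_bound b hb
  refine Summable.of_norm_bounded (g := fun k => C * (|w| ^ k / (Nat.factorial k : ℝ))) ?_ ?_
  · exact (Real.summable_pow_div_factorial |w|).mul_left C
  · intro k
    rw [norm_mul, norm_pow, Real.norm_eq_abs, Real.norm_eq_abs]
    calc |cF b k| * |w| ^ k ≤ C / (Nat.factorial k : ℝ) * |w| ^ k := by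
          gcongr; exact h k
      _ = _ := by ring

lemma cF_succ (b : ℝ) (k : ℕ) : cF b (k + 1) * ((k + 1 : ℕ) : ℝ) = - cF (b + 1) k := by
  have e : b + ((k + 1 : ℕ) : ℝ) = b + 1 + k := by push_cast; ring
  rw [cF, cF, e, Nat.factorial_succ, pow_succ]
  have : ((k + 1 : ℕ) : ℝ) ≠ 0 := by positivity
  rw [Nat.cast_mul, mul_assoc, div_mul_eq_mul_div, mul_comm ((k + 1 : ℕ) : ℝ),
    mul_div_mul_right _ _ this]
  ring

lemma FF_hasDerivAt (b : ℝ) (hb : 0 < b) (w : ℝ) : HasDerivAt (FF b) (- FF (b + 1) w) w := by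
  obtain ⟨C, hC, h⟩ := cF_bound (b + 1) (by linarith)
  set R := |w| + 1 with hR
  have hRpos : 0 < R := by positivity
  let u : ℕ → ℝ := fun k => |cF b k| * (k * R ^ (k - 1))
  have hu : Summable u := by
    rw [← summable_nat_add_iff 1]
    refine Summable.of_norm_bounded (g := fun k => C * (R ^ k / (Nat.factorial k : ℝ)))
      ((Real.summable_pow_div_factorial R).mul_left C) ?_
    intro k
    have : u (k + 1) = |cF (b + 1) k| * R ^ k := by
      simp only [u]
      rw [← abs_neg (cF (b + 1) k), ← cF_succ, abs_mul, Nat.abs_cast]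
      simp; ring
    rw [this, norm_mul, norm_pow, Real.norm_eq_abs, abs_abs, Real.norm_eq_abs, abs_of_pos hRpos]
    calc _ ≤ C / (Nat.factorial k : ℝ) * R ^ k := by
          gcongr; exact h k
      _ = _ := by ring
  have key := hasDerivAt_tsum_of_isPreconnected (𝕜 := ℝ) (u := u)
    (g := fun k y => cF b k * y ^ k)
    (g' := fun k y => cF b k * (k * y ^ (k - 1))) (t := ball (0 : ℝ) R) (y₀ := 0) (y := w)
    hu isOpen_ball (convex_ball _ _).isPreconnected
    (fun k y _ => (hasDerivAt_pow k y).const_mul _)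
    (by
      intro k y hy
      have hy' : |y| ≤ R := by simpa using (mem_ball_zero_iff.1 hy).le
      simp only [u, norm_mul, norm_pow, Real.norm_eq_abs, Nat.abs_cast]
      gcongr)
    (by simpa using hRpos) (cF_summable b hb 0)
    (by simp [hR])
  have hsum : ∑' k, cF b k * (k * w ^ (k - 1)) = - FF (b + 1) w := by
    have hs : Summable fun k : ℕ => cF b k * (k * w ^ (k - 1)) := by
      refine Summable.of_norm_bounded hu fun k => ?_
      have hy' : |w| ≤ R := by simp [hR]
      simp only [u, norm_mul, norm_pow, Real.norm_eq_abs, Nat.abs_cast]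
      gcongr
    rw [hs.tsum_eq_zero_add, FF, ← tsum_neg]
    simp only [Nat.cast_zero, zero_mul, mul_zero, zero_add]
    refine tsum_congr fun k => ?_
    rw [← neg_mul, ← cF_succ]
    simp; ring
  rw [← hsum]
  exact key

lemma cF_contig (b : ℝ) (hb : 0 < b) (k : ℕ) :
    cF b (k + 1) = b * cF (b + 1) (k + 1) - cF (b + 2) k := by
  have h1 := cF_succ (b + 1) k
  have e2 : b + 1 + 1 = b + 2 := by ring
  rw [e2] at h1
  have h2 : b * cF (b + 1) (k + 1) - cF (b + 2) k
      = (b + (k + 1 : ℕ)) * cF (b + 1) (k + 1) := by linarith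
  rw [h2, cF, cF]
  have hp : (0 : ℝ) < b + (k + 1 : ℕ) := by positivity
  have e3 : b + 1 + ((k + 1 : ℕ) : ℝ) = (b + (k + 1 : ℕ)) + 1 := by ring
  rw [e3, Real.Gamma_add_one hp.ne']
  have := (Real.Gamma_pos_of_pos hp).ne'
  field_simp

lemma FF_contig (b : ℝ) (hb : 0 < b) (w : ℝ) :
    FF b w = b * FF (b + 1) w - w * FF (b + 2) w := by
  have h0 := cF_summable b hb w
  have h1 := cF_summable (b + 1) (by linarith) w
  have h2 := cF_summable (b + 2) (by linarith) w
  unfold FF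
  rw [h0.tsum_eq_zero_add, h1.tsum_eq_zero_add, ← tsum_mul_left, mul_add, ← tsum_mul_left,
    add_sub_assoc, ← Summable.tsum_sub]
  · congr 1
    · simp only [cF, Nat.cast_zero, add_zero, Real.Gamma_add_one hb.ne']
      have := (Real.Gamma_pos_of_pos hb).ne'
      simp
      field_simp
    · refine tsum_congr fun k => ?_
      rw [cF_contig b hb]; ring
  · exact ((summable_nat_add_iff 1).2 h1).mul_left b
  · exact h2.mul_left w

lemma FF_zero (b : ℝ) : FF b 0 = (Real.Gamma b)⁻¹ := by
  rw [FF, tsum_eq_single 0]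
  · simp [cF]
  · intro k hk; simp [hk]

lemma FF_continuous (b : ℝ) (hb : 0 < b) : Continuous (FF b) :=
  continuous_iff_continuousAt.2 fun w => (FF_hasDerivAt b hb w).continuousAt

lemma FF_bound (b : ℝ) (hb : 1 / 2 ≤ b) (w : ℝ) (hw : 0 ≤ w) :
    Real.Gamma b * FF b w ≤ 1 := by
  have hb0 : 0 < b := by linarith
  have hd : ∀ x : ℝ, HasDerivAt (fun w => FF b w ^ 2 + w * FF (b + 1) w ^ 2)
      ((1 - 2 * b) * FF (b + 1) x ^ 2) x := by
    intro x
    have h1 := (FF_hasDerivAt b hb0 x).pow 2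
    have h2 := (hasDerivAt_id x).mul ((FF_hasDerivAt (b + 1) (by linarith) x).pow 2)
    have h3 := h1.add h2
    have e2 : b + 1 + 1 = b + 2 := by ring
    rw [e2] at h3
    convert! h3 using 1
    have := FF_contig b hb0 x
    simp only [id, Pi.pow_apply]
    push_cast
    rw [this]; ring
  have hanti : AntitoneOn (fun w => FF b w ^ 2 + w * FF (b + 1) w ^ 2) (Ici 0) := by
    apply antitoneOn_of_deriv_nonpos (convex_Ici 0)
    · exact fun x _ => (hd x).continuousAt.continuousWithinAt
    · exact fun x _ => (hd x).differentiableAt.differentiableWithinAt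
    · intro x _
      rw [(hd x).deriv]
      nlinarith [sq_nonneg (FF (b + 1) x)]
  have h := hanti (by simp : (0 : ℝ) ∈ Ici 0) (by simpa using hw) hw
  simp only [FF_zero, zero_mul, add_zero] at h
  have hG := Real.Gamma_pos_of_pos hb0
  have h2 : FF b w ^ 2 ≤ (Real.Gamma b)⁻¹ ^ 2 := by
    nlinarith [mul_nonneg hw (sq_nonneg (FF (b + 1) w))]
  have h3 := abs_le_of_sq_le_sq h2 (by positivity)
  calc Real.Gamma b * FF b w ≤ Real.Gamma b * (Real.Gamma b)⁻¹ := by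
        gcongr; exact (le_abs_self _).trans h3
    _ = 1 := mul_inv_cancel₀ hG.ne'

lemma gamma_integrable (a r : ℝ) (ha : 0 < a) (hr : 0 < r) :
    IntegrableOn (fun t : ℝ => t ^ (a - 1) * Real.exp (-(r * t))) (Ioi 0) := by
  by_contra hcon
  have h := integral_undef hcon
  rw [Real.integral_rpow_mul_exp_neg_mul_Ioi ha hr] at h
  have := Real.Gamma_pos_of_pos ha
  have : 0 < (1 / r) ^ a * Real.Gamma a := by positivity
  linarith

lemma FF_laplace (b : ℝ) (hb : 0 < b) (x : ℝ) (hx : 0 < x) :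
    ∫ w in Ioi (0 : ℝ), w ^ (b - 1) * Real.exp (-(x * w)) * FF b w
      = (1 / x) ^ b * Real.exp (-(1 / x)) := by
  let T : ℕ → ℝ → ℝ := fun k w => cF b k * (w ^ (b + k - 1) * Real.exp (-(x * w)))
  have hbk : ∀ k : ℕ, 0 < b + (k : ℝ) := fun k => by positivity
  have hIntg : ∀ k, IntegrableOn (T k) (Ioi 0) := fun k =>
    (gamma_integrable (b + k) x (hbk k) hx).const_mul _
  have hG : ∀ k : ℕ, 0 < Real.Gamma (b + k) := fun k => Real.Gamma_pos_of_pos (hbk k)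
  have hval : ∀ k, ∫ w in Ioi (0 : ℝ), T k w
      = (1 / x) ^ b * ((-(1 / x)) ^ k / (Nat.factorial k : ℝ)) := by
    intro k
    simp only [T]
    rw [integral_const_mul, Real.integral_rpow_mul_exp_neg_mul_Ioi (hbk k) hx,
      Real.rpow_add (by positivity), Real.rpow_natCast, cF, neg_pow (1 / x)]
    have := (hG k).ne'
    field_simp
  have hnorm : ∀ k, ∫ w in Ioi (0 : ℝ), ‖T k w‖
      = (1 / x) ^ b * ((1 / x) ^ k / (Nat.factorial k : ℝ)) := by
    intro k
    have : ∀ w ∈ Ioi (0 : ℝ), ‖T k w‖ = |cF b k| * (w ^ (b + k - 1) * Real.exp (-(x * w))) := by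
      intro w hw
      have hw : 0 < w := hw
      simp only [T]
      rw [norm_mul, Real.norm_eq_abs, Real.norm_eq_abs,
        abs_of_pos (show 0 < w ^ (b + k - 1) * Real.exp (-(x * w)) by positivity)]
    rw [setIntegral_congr_fun measurableSet_Ioi this, integral_const_mul,
      Real.integral_rpow_mul_exp_neg_mul_Ioi (hbk k) hx,
      Real.rpow_add (by positivity), Real.rpow_natCast, cF, abs_div, abs_pow, abs_neg, abs_one,
      one_pow, abs_of_pos (mul_pos (by positivity) (hG k))]
    have := (hG k).ne'
    field_simp
  have hs : Summable fun k => ∫ w in Ioi (0 : ℝ), ‖T k w‖ := by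
    simp only [hnorm]
    exact (Real.summable_pow_div_factorial _).mul_left _
  have key := hasSum_integral_of_summable_integral_norm hIntg hs
  simp only [hval] at key
  have e1 : ∫ w in Ioi (0 : ℝ), w ^ (b - 1) * Real.exp (-(x * w)) * FF b w
      = ∫ w in Ioi (0 : ℝ), ∑' k, T k w := by
    refine setIntegral_congr_fun measurableSet_Ioi fun w hw => ?_
    have hw : 0 < w := hw
    simp only [FF, T]
    rw [← tsum_mul_left]
    refine tsum_congr fun k => ?_
    have : b + (k : ℝ) - 1 = (b - 1) + k := by ring
    rw [this, Real.rpow_add hw, Real.rpow_natCast]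
    ring
  rw [e1, ← key.tsum_eq, tsum_mul_left, Real.exp_eq_exp_ℝ, NormedSpace.exp_eq_tsum_div]

lemma FF_integrable (b : ℝ) (hb : 0 < b) (x : ℝ) (hx : 0 < x) :
    IntegrableOn (fun w : ℝ => w ^ (b - 1) * Real.exp (-(x * w)) * FF b w) (Ioi 0) := by
  by_contra hcon
  have h := integral_undef hcon
  rw [FF_laplace b hb x hx] at h
  have : 0 < (1 / x) ^ b * Real.exp (-(1 / x)) := by positivity
  linarith

/-- `G_b = 1 - Γ(b) F_b`. -/
def GG (b w : ℝ) : ℝ := 1 - Real.Gamma b * FF b w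

lemma GG_integrable (b : ℝ) (hb : 0 < b) (x : ℝ) (hx : 0 < x) :
    IntegrableOn (fun w : ℝ => w ^ (b - 1) * Real.exp (-(x * w)) * GG b w) (Ioi 0) := by
  have := (gamma_integrable b x hb hx).sub ((FF_integrable b hb x hx).const_mul (Real.Gamma b))
  refine this.congr (ae_of_all _ fun w => ?_)
  simp only [GG, Pi.sub_apply]; ring

lemma GG_laplace (b : ℝ) (hb : 0 < b) (x : ℝ) (hx : 0 < x) :
    ∫ w in Ioi (0 : ℝ), w ^ (b - 1) * Real.exp (-(x * w)) * GG b w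
      = Real.Gamma b * (1 / x) ^ b * (1 - Real.exp (-(1 / x))) := by
  have h := integral_sub (gamma_integrable b x hb hx)
    ((FF_integrable b hb x hx).const_mul (Real.Gamma b))
  rw [integral_const_mul, FF_laplace b hb x hx, Real.integral_rpow_mul_exp_neg_mul_Ioi hb hx] at h
  rw [show Real.Gamma b * (1 / x) ^ b * (1 - Real.exp (-(1 / x))) =
    (1 / x) ^ b * Real.Gamma b - Real.Gamma b * ((1 / x) ^ b * Real.exp (-(1 / x))) by ring, ← h]
  congr 1
  ext w
  simp only [GG]; ring

/-- `h(y) = 1 - e^{-y}` -/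
def hh (y : ℝ) : ℂ := ((1 - Real.exp (-y) : ℝ) : ℂ)

lemma hh_norm_le_one (y : ℝ) (hy : 0 ≤ y) : ‖hh y‖ ≤ 1 := by
  rw [hh, Complex.norm_real, Real.norm_eq_abs, abs_le]
  have h1 := Real.exp_pos (-y)
  have h2 : Real.exp (-y) ≤ 1 := Real.exp_le_one_iff.2 (by linarith)
  constructor <;> linarith

lemma hh_norm_le (y : ℝ) (hy : 0 ≤ y) : ‖hh y‖ ≤ y := by
  rw [hh, Complex.norm_real, Real.norm_eq_abs, abs_le]
  have h1 := Real.add_one_le_exp (-y)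
  have h2 : Real.exp (-y) ≤ 1 := Real.exp_le_one_iff.2 (by linarith)
  constructor <;> linarith

lemma hh_continuous : Continuous hh := by
  unfold hh; fun_prop

lemma hh_convergent (σ : ℂ) (h1 : -1 < σ.re) (h0 : σ.re < 0) : MellinConvergent hh σ := by
  refine mellinConvergent_of_isBigO_rpow (a := 0) (b := -1) ?_ ?_ h0 ?_ h1
  · exact hh_continuous.locallyIntegrable.locallyIntegrableOn _
  · refine Asymptotics.IsBigO.of_bound 1 ?_
    filter_upwards [eventually_ge_atTop 0] with y hy
    simpa using hh_norm_le_one y hy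
  · refine Asymptotics.IsBigO.of_bound 1 ?_
    filter_upwards [self_mem_nhdsWithin] with y hy
    have hy : 0 < y := hy
    simpa [abs_of_pos hy] using hh_norm_le y hy.le

lemma hh_mellin (σ : ℂ) (h1 : -1 < σ.re) (h0 : σ.re < 0) : mellin hh σ = - Complex.Gamma σ := by
  have hσ : σ ≠ 0 := by
    intro h; rw [h] at h0; simp at h0
  have hσ1 : 0 < (σ + 1).re := by simp; linarith
  have hconv := hh_convergent σ h1 h0
  have hnorm : ∀ y : ℝ, 0 < y → ‖(y : ℂ) ^ σ / σ‖ = y ^ σ.re / ‖σ‖ := by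
    intro y hy
    rw [norm_div, Complex.norm_cpow_eq_rpow_re_of_pos hy]
  have hgi : IntegrableOn (fun x : ℝ => (Real.exp (-x) : ℂ) * (x : ℂ) ^ σ) (Ioi 0) := by
    have := Complex.GammaIntegral_convergent hσ1
    simpa using this
  have key := integral_Ioi_mul_deriv_eq_deriv_mul (a := 0) (u := hh)
    (u' := fun y => ((Real.exp (-y) : ℝ) : ℂ))
    (v := fun y : ℝ => (y : ℂ) ^ σ / σ) (v' := fun y : ℝ => (y : ℂ) ^ (σ - 1)) (a' := 0) (b' := 0)
    (by
      intro y _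
      have : HasDerivAt (fun y : ℝ => 1 - Real.exp (-y)) (Real.exp (-y)) y := by
        have := ((hasDerivAt_neg y).exp).const_sub 1
        simpa using this
      exact this.ofReal_comp)
    (by
      intro y hy
      have hy : 0 < y := hy
      have h := (hasDerivAt_ofReal_cpow_const (x := y) (r := σ) hy.ne' hσ).div_const σ
      rwa [mul_div_cancel_left₀ _ hσ] at h)
    (by
      refine hconv.congr (ae_of_all _ fun y => ?_)
      simp [mul_comm])
    (by
      refine (hgi.div_const σ).congr (ae_of_all _ fun y => ?_)
      simp [mul_div_assoc])
    (by
      rw [tendsto_zero_iff_norm_tendsto_zero]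
      have hlim : Tendsto (fun y : ℝ => y ^ (σ.re + 1) / ‖σ‖) (𝓝[>] 0) (𝓝 0) := by
        have hc : ContinuousAt (fun y : ℝ => y ^ (σ.re + 1) / ‖σ‖) 0 :=
          (Real.continuousAt_rpow_const _ _ (Or.inr (by linarith))).div_const _
        have := hc.tendsto.mono_left (nhdsWithin_le_nhds (s := Ioi 0))
        rwa [Real.zero_rpow (by linarith), zero_div] at this
      refine squeeze_zero' (Eventually.of_forall fun y => norm_nonneg _) ?_ hlim
      filter_upwards [self_mem_nhdsWithin] with y hy
      have hy : 0 < y := hy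
      rw [Pi.mul_apply, norm_mul, hnorm y hy, Real.rpow_add_one hy.ne']
      have := hh_norm_le y hy.le
      calc ‖hh y‖ * (y ^ σ.re / ‖σ‖) ≤ y * (y ^ σ.re / ‖σ‖) := by gcongr
        _ = _ := by ring)
    (by
      rw [tendsto_zero_iff_norm_tendsto_zero]
      have hlim : Tendsto (fun y : ℝ => y ^ σ.re / ‖σ‖) atTop (𝓝 0) := by
        have := (tendsto_rpow_neg_atTop (y := -σ.re) (by linarith)).div_const ‖σ‖
        simpa using this
      refine squeeze_zero' (Eventually.of_forall fun y => norm_nonneg _) ?_ hlim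
      filter_upwards [eventually_gt_atTop 0] with y hy
      rw [Pi.mul_apply, norm_mul, hnorm y hy]
      have := hh_norm_le_one y hy.le
      calc ‖hh y‖ * (y ^ σ.re / ‖σ‖) ≤ 1 * (y ^ σ.re / ‖σ‖) := by gcongr
        _ = _ := by ring)
  have e1 : mellin hh σ = ∫ y in Ioi (0 : ℝ), hh y * (y : ℂ) ^ (σ - 1) := by
    simp only [mellin, smul_eq_mul, mul_comm]
  have e2 : ∫ y in Ioi (0 : ℝ), ((Real.exp (-y) : ℝ) : ℂ) * ((y : ℂ) ^ σ / σ)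
      = Complex.Gamma (σ + 1) / σ := by
    rw [Complex.Gamma_eq_integral hσ1, Complex.GammaIntegral, ← integral_div]
    simp [mul_div_assoc]
  rw [e1, key, e2, Complex.Gamma_add_one σ hσ]
  field_simp
  ring

lemma GG_nonneg (b : ℝ) (hb : 1 / 2 ≤ b) (w : ℝ) (hw : 0 ≤ w) : 0 ≤ GG b w := by
  have := FF_bound b hb w hw
  rw [GG]; linarith

lemma GG_mellin (b : ℝ) (hb : 1 / 2 ≤ b) (σ : ℂ) (h1 : -1 < σ.re) (h0 : σ.re < 0) :
    Complex.Gamma (b - σ) * mellin (fun w => (GG b w : ℂ)) σ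
      = - (Real.Gamma b * Complex.Gamma σ) := by
  have hb0 : 0 < b := by linarith
  have hcont : Continuous (GG b) := by
    unfold GG
    exact continuous_const.sub (continuous_const.mul (FF_continuous b hb0))
  have ha : 0 < ((b : ℂ) - σ).re := by simp; linarith
  let f : ℝ → ℝ → ℂ := fun w x =>
    (x : ℂ) ^ ((b : ℂ) - σ - 1) * ((w ^ (b - 1) * Real.exp (-(x * w)) * GG b w : ℝ) : ℂ)
  have hmeas : AEStronglyMeasurable (Function.uncurry f)
      ((volume.restrict (Ioi (0 : ℝ))).prod (volume.restrict (Ioi (0 : ℝ)))) := by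
    apply Measurable.aestronglyMeasurable
    simp only [f, Function.uncurry_def]
    have := hcont.measurable
    fun_prop
  have hnorm : ∀ w ∈ Ioi (0 : ℝ), ∀ x ∈ Ioi (0 : ℝ), ‖f w x‖
      = x ^ (b - σ.re - 1) * (w ^ (b - 1) * Real.exp (-(x * w)) * GG b w) := by
    intro w hw x hx
    have hw : 0 < w := hw
    have hx : 0 < x := hx
    simp only [f]
    rw [norm_mul, Complex.norm_cpow_eq_rpow_re_of_pos hx, Complex.norm_real, Real.norm_eq_abs,
      abs_of_nonneg]
    · simp
    · have := GG_nonneg b hb w hw.le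
      positivity
  have hinv : MellinConvergent (fun x => hh x⁻¹) (-σ) := by
    have h := (MellinConvergent.comp_rpow (f := hh) (s := -σ) (a := -1) (by norm_num)).2
      (by simpa using hh_convergent σ h1 h0)
    simpa [Real.rpow_neg_one] using h
  have hpow : ∀ x ∈ Ioi (0 : ℝ), (x : ℂ) ^ ((b : ℂ) - σ - 1) * (((1 / x) ^ b : ℝ) : ℂ)
      = (x : ℂ) ^ (-σ - 1) := by
    intro x hx
    have hx : 0 < x := hx
    have hxc : (x : ℂ) ≠ 0 := by exact_mod_cast hx.ne'
    rw [one_div, Real.inv_rpow hx.le, ← Real.rpow_neg hx.le, Complex.ofReal_cpow hx.le,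
      ← Complex.cpow_add _ _ hxc]
    congr 1
    push_cast; ring
  have hw_int : ∀ x ∈ Ioi (0 : ℝ), ∫ w in Ioi (0 : ℝ), f w x
      = Real.Gamma b * ((x : ℂ) ^ (-σ - 1) * hh x⁻¹) := by
    intro x hx
    simp only [f]
    rw [integral_const_mul, integral_complex_ofReal, GG_laplace b hb0 x hx, ← hpow x hx]
    simp only [hh, one_div]
    push_cast
    ring
  have hIntg : Integrable (Function.uncurry f)
      ((volume.restrict (Ioi (0 : ℝ))).prod (volume.restrict (Ioi (0 : ℝ)))) := by
    rw [integrable_prod_iff' hmeas]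
    constructor
    · filter_upwards [ae_restrict_mem measurableSet_Ioi] with x hx
      have h := Integrable.ofReal (𝕜 := ℂ) (GG_integrable b hb0 x hx)
      exact h.const_mul ((x : ℂ) ^ ((b : ℂ) - σ - 1))
    · refine (hinv.norm.const_mul (Real.Gamma b)).congr ?_
      filter_upwards [ae_restrict_mem measurableSet_Ioi] with x hx
      have hx0 : 0 < x := hx
      have e : ∫ w in Ioi (0 : ℝ), ‖f w x‖ = x ^ (b - σ.re - 1) *
          (Real.Gamma b * (1 / x) ^ b * (1 - Real.exp (-(1 / x)))) := by
        rw [← GG_laplace b hb0 x hx, ← integral_const_mul]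
        exact setIntegral_congr_fun measurableSet_Ioi fun w hw => hnorm w hw x hx
      simp only [Function.uncurry_apply_pair]
      rw [e, smul_eq_mul, ← hpow x hx, norm_mul, norm_mul, Complex.norm_real, hh,
        Complex.norm_real, Complex.norm_cpow_eq_rpow_re_of_pos hx0, Real.norm_eq_abs,
        Real.norm_eq_abs, abs_of_pos (by positivity), abs_of_nonneg]
      · simp; ring
      · have : Real.exp (-x⁻¹) ≤ 1 := Real.exp_le_one_iff.2 (by simp [hx0.le])
        linarith
  have hx_int : ∀ w ∈ Ioi (0 : ℝ), ∫ x in Ioi (0 : ℝ), f w x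
      = Complex.Gamma (b - σ) * ((w : ℂ) ^ (σ - 1) • (GG b w : ℂ)) := by
    intro w hw
    have hw0 : 0 < w := hw
    have hwc : (w : ℂ) ≠ 0 := by exact_mod_cast hw0.ne'
    have e := Complex.integral_cpow_mul_exp_neg_mul_Ioi ha hw0
    have e2 : ∀ x, f w x = ((x : ℂ) ^ ((b : ℂ) - σ - 1) * Complex.exp (-(w * x))) *
        ((w ^ (b - 1) * GG b w : ℝ) : ℂ) := by
      intro x; simp only [f]; push_cast
      rw [mul_comm (x : ℂ) (w : ℂ)]; ring
    simp only [e2]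
    rw [integral_mul_const, e]
    have e3 : (1 / (w : ℂ)) ^ ((b : ℂ) - σ) = (w : ℂ) ^ (-((b : ℂ) - σ)) := by
      rw [one_div, Complex.cpow_neg, Complex.inv_cpow]
      rw [Complex.arg_ofReal_of_nonneg hw0.le]
      exact Real.pi_pos.ne
    have e4 : (w : ℂ) ^ (σ - 1) = (w : ℂ) ^ (-((b : ℂ) - σ)) * ((w ^ (b - 1) : ℝ) : ℂ) := by
      rw [Complex.ofReal_cpow hw0.le, ← Complex.cpow_add _ _ hwc]
      congr 1; push_cast; ring
    rw [e3, e4, smul_eq_mul]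
    push_cast; ring
  have hswap := integral_integral_swap hIntg
  rw [setIntegral_congr_fun measurableSet_Ioi hx_int,
    setIntegral_congr_fun measurableSet_Ioi hw_int, integral_const_mul, integral_const_mul] at hswap
  have e5 : ∫ x in Ioi (0 : ℝ), (x : ℂ) ^ (-σ - 1) * hh x⁻¹ = - Complex.Gamma σ := by
    rw [← hh_mellin σ h1 h0]
    have := mellin_comp_inv hh (-σ)
    rw [neg_neg] at this
    rw [← this]; rfl
  rw [e5] at hswap
  rw [mellin, hswap]
  ring

lemma kernelL_eq (d : ℕ) (u : ℝ) (hu : 0 < u) :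
    kernelL d u = Real.pi ^ (-(3 : ℝ) / 2) *
      (Real.Gamma (((d : ℝ) + 1) / 2) / Real.Gamma ((d : ℝ) / 2)) *
      GG ((d : ℝ) / 2) ((Real.pi * u) ^ (2 : ℝ)) := by
  have hp : 0 < Real.pi * u := by positivity
  rw [kernelL, GG, mul_div_assoc]
  congr 3
  rw [besselJ, FF, ← tsum_div_const]
  refine tsum_congr fun k => ?_
  have e1 : 2 * Real.pi * u / 2 = Real.pi * u := by ring
  have e2 : (d : ℝ) / 2 - 1 + k + 1 = (d : ℝ) / 2 + k := by ring
  rw [e1, e2, Real.rpow_add hp, cF, Real.rpow_mul hp.le, Real.rpow_natCast]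
  have := (Real.rpow_pos_of_pos hp ((d : ℝ) / 2 - 1)).ne'
  field_simp

lemma K2hat_formula (d : ℕ) (hd : 1 ≤ d) (τ : ℝ) (σ : ℂ)
    (hσ : σ = -(1 / 2 : ℝ) + Real.pi * τ * Complex.I) :
    K2hat d τ = (Real.pi ^ (-(3 : ℝ) / 2) *
      (Real.Gamma (((d : ℝ) + 1) / 2) / Real.Gamma ((d : ℝ) / 2)) : ℝ) *
      ((Real.pi : ℂ) ^ (-(2 * σ)) * ((1 / 2) *
        (-(Real.Gamma ((d : ℝ) / 2) * Complex.Gamma σ) /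
          Complex.Gamma (((d : ℝ) / 2 : ℝ) - σ)))) := by
  set b : ℝ := (d : ℝ) / 2 with hbdef
  have hb : 1 / 2 ≤ b := by
    have : (1 : ℝ) ≤ d := by exact_mod_cast hd
    rw [hbdef]; linarith
  have hre : σ.re = -(1 / 2) := by rw [hσ]; simp
  have hG := GG_mellin b hb σ (by rw [hre]; norm_num) (by rw [hre]; norm_num)
  have hne : Complex.Gamma (b - σ) ≠ 0 := by
    apply Complex.Gamma_ne_zero_of_re_pos
    simp [hre]; linarith
  have hM : mellin (fun w => (GG b w : ℂ)) σ
      = -(Real.Gamma b * Complex.Gamma σ) / Complex.Gamma (b - σ) := by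
    rw [eq_div_iff hne, mul_comm, hG]
  rw [← hM]
  have h2 := mellin_comp_rpow (fun w => (GG b w : ℂ)) (2 * σ) 2
  have h3 := mellin_comp_mul_left (fun t : ℝ => (GG b (t ^ (2 : ℝ)) : ℂ)) (2 * σ) Real.pi_pos
  have e1 : 2 * σ / ((2 : ℝ) : ℂ) = σ := by push_cast; field_simp
  rw [e1] at h2
  rw [h2] at h3
  have h4 : ((Real.pi : ℂ) ^ (-(2 * σ)) * ((1 / 2) * mellin (fun w => (GG b w : ℂ)) σ))
      = mellin (fun t : ℝ => (GG b ((Real.pi * t) ^ (2 : ℝ)) : ℂ)) (2 * σ) := by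
    rw [h3]
    simp
  rw [h4, mellin, ← integral_const_mul, K2hat]
  refine setIntegral_congr_fun measurableSet_Ioi fun u hu => ?_
  have e2 : (-2 : ℂ) + 2 * Real.pi * Complex.I * τ = 2 * σ - 1 := by
    rw [hσ]; push_cast; ring
  simp only [smul_eq_mul]
  rw [kernelL_eq d u hu, e2]
  push_cast
  ring

/-- `K̂₂(0) = 1` and `K̂₂` has no real root. -/
theorem K2hat_ne_zero (d : ℕ) (hd : 1 ≤ d) :
    K2hat d 0 = 1 ∧ ∀ τ : ℝ, K2hat d τ ≠ 0 := by
  have hd' : (1 : ℝ) ≤ d := by exact_mod_cast hd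
  have hG1 := Real.Gamma_pos_of_pos (show 0 < ((d : ℝ) + 1) / 2 by positivity)
  have hG2 := Real.Gamma_pos_of_pos (show 0 < (d : ℝ) / 2 by positivity)
  constructor
  · rw [K2hat_formula d hd 0 ((-(1 / 2) : ℝ) : ℂ) (by push_cast; ring)]
    have e1 : (Real.pi : ℂ) ^ (-(2 * ((-(1 / 2) : ℝ) : ℂ))) = ((Real.pi : ℝ) : ℂ) := by
      rw [show (-(2 * ((-(1 / 2) : ℝ) : ℂ))) = 1 by push_cast; ring, Complex.cpow_one]
    have e2 : (((d : ℝ) / 2 : ℝ) : ℂ) - ((-(1 / 2) : ℝ) : ℂ) = ((((d : ℝ) + 1) / 2 : ℝ) : ℂ) := by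
      push_cast; ring
    have e3 : Real.Gamma (-(1 / 2)) = -2 * √Real.pi := by
      have h := Real.Gamma_add_one (s := -(1 / 2)) (by norm_num)
      rw [show -(1 / 2 : ℝ) + 1 = 1 / 2 by norm_num, Real.Gamma_one_half_eq] at h
      linarith
    have e4 : Real.pi ^ (-(3 : ℝ) / 2) * Real.pi * √Real.pi = 1 := by
      rw [Real.sqrt_eq_rpow, ← Real.rpow_add_one Real.pi_pos.ne', ← Real.rpow_add Real.pi_pos]
      norm_num
    rw [e1, e2, Complex.Gamma_ofReal, Complex.Gamma_ofReal, e3]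
    have e5 : Real.pi ^ (-(3 : ℝ) / 2) *
        (Real.Gamma (((d : ℝ) + 1) / 2) / Real.Gamma ((d : ℝ) / 2)) *
        (Real.pi * ((1 / 2) * (-(Real.Gamma ((d : ℝ) / 2) * (-2 * √Real.pi)) /
          Real.Gamma (((d : ℝ) + 1) / 2)))) = 1 := by
      generalize Real.pi ^ (-(3 : ℝ) / 2) = p at e4 ⊢
      refine Eq.trans ?_ e4
      field_simp
    have e6 := congrArg (fun r : ℝ => (r : ℂ)) e5
    simp only [Complex.ofReal_mul, Complex.ofReal_div, Complex.ofReal_neg, Complex.ofReal_one,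
      Complex.ofReal_ofNat] at e6 ⊢
    exact e6
  · intro τ
    rw [K2hat_formula d hd τ _ rfl]
    have hπ : (Real.pi : ℂ) ≠ 0 := by exact_mod_cast Real.pi_pos.ne'
    refine mul_ne_zero ?_ (mul_ne_zero ?_ (mul_ne_zero (by norm_num) (div_ne_zero ?_ ?_)))
    · have : 0 < Real.pi ^ (-(3 : ℝ) / 2) *
          (Real.Gamma (((d : ℝ) + 1) / 2) / Real.Gamma ((d : ℝ) / 2)) := by positivity
      exact_mod_cast this.ne'
    · rw [Ne, Complex.cpow_eq_zero_iff]; exact fun h => hπ h.1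
    · refine neg_ne_zero.2 (mul_ne_zero (by exact_mod_cast hG2.ne') ?_)
      apply Complex.Gamma_ne_zero
      intro m h
      have := congrArg Complex.re h
      simp at this
      have h2 : (m : ℝ) * 2 = 1 := by linarith
      have h3 : m * 2 = 1 := by exact_mod_cast h2
      omega
    · apply Complex.Gamma_ne_zero_of_re_pos
      simp; linarith

end
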